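/- Let n ≥ 2 be an integer and λ ∈ ℝ. Let f be the maximal solution of the profile ODE f''(r)/(1 + f'(r)²) = (r − (n−1)/r)·f'(r) − f(r) − λ·√(1 + f'(r)²), defined on a maximal interval [0, r_*), C¹ on [0, r_*) and C² on (0, r_*), with f(0) > −λ and f'(0) = 0. Then f''(r) < 0 for all r ∈ (0, r_*), the maximal existence radius r_* is finite, lim_{r → r_*⁻} f'(r) = −∞, and lim_{r → r_*⁻} f(r) > −∞ (i.e., f stays bounded while its derivative blows up at r_*). -/

import Mathlib

open Real Set Filter

/-- The profile ODE (2.7): `f''/(1+f'²) = (r - (n-1)/r) f' - f - λ √(1+f'²)` at the point `r`. -/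
def ProfileEq (n : ℕ) (lam : ℝ) (f : ℝ → ℝ) (r : ℝ) : Prop :=
  deriv (deriv f) r / (1 + (deriv f r) ^ 2) =
    (r - ((n : ℝ) - 1) / r) * deriv f r - f r - lam * Real.sqrt (1 + (deriv f r) ^ 2)

/-- `f` is a solution of the profile ODE on `[0, R)` (where `R` may be `+∞`):
`C¹` up to `0`, `C²` away from `0`, and satisfying the equation on `(0, R)`. -/
def IsProfileSolOn (n : ℕ) (lam : ℝ) (f : ℝ → ℝ) (R : EReal) : Prop :=
  ContDiffOn ℝ 1 f {r : ℝ | 0 ≤ r ∧ (r : EReal) < R} ∧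
  ContDiffOn ℝ 2 f {r : ℝ | 0 < r ∧ (r : EReal) < R} ∧
  ∀ r : ℝ, 0 < r → (r : EReal) < R → ProfileEq n lam f r


/-- the right-hand side of the profile equation -/
noncomputable def PG (m lam : ℝ) (f h : ℝ → ℝ) (r : ℝ) : ℝ :=
  (r - m / r) * h r - f r - lam * Real.sqrt (1 + (h r) ^ 2)

structure PData (m lam : ℝ) (f h : ℝ → ℝ) (R : EReal) : Prop where
  hf : ∀ r : ℝ, 0 < r → (r : EReal) < R → HasDerivAt f (h r) r
  hh : ∀ r : ℝ, 0 < r → (r : EReal) < R →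
    HasDerivAt h ((1 + (h r) ^ 2) * PG m lam f h r) r

lemma PData.mono_aux {R : EReal} {a b : ℝ} (hab : a ≤ b) (hb : (b : EReal) < R) :
    (a : EReal) < R := lt_of_le_of_lt (EReal.coe_le_coe_iff.2 hab) hb

lemma PData.dG {m lam : ℝ} {f h : ℝ → ℝ} {R : EReal} (H : PData m lam f h R)
    {r : ℝ} (hr : 0 < r) (hrR : (r : EReal) < R) :
    HasDerivAt (PG m lam f h)
      (m / r ^ 2 * h r + (r - m / r + -lam * (h r / Real.sqrt (1 + (h r) ^ 2))) *
        ((1 + (h r) ^ 2) * PG m lam f h r)) r := by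
  have h1 := H.hf r hr hrR
  have h2 := H.hh r hr hrR
  set D := (1 + (h r) ^ 2) * PG m lam f h r with hD
  have hpos : (0:ℝ) < 1 + (h r) ^ 2 := by positivity
  have hs : HasDerivAt (fun x => Real.sqrt (1 + (h x) ^ 2))
      ((2 * h r * D) / (2 * Real.sqrt (1 + (h r) ^ 2))) r := by
    have := ((h2.pow 2).const_add 1).sqrt hpos.ne'
    simpa using this
  have hi : HasDerivAt (fun x : ℝ => x - m / x) (1 + m / r ^ 2) r := by
    have := (hasDerivAt_id r).sub ((hasDerivAt_inv hr.ne').const_mul m)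
    refine this.congr_deriv ?_
    field_simp
    ring
  have h3 := ((hi.mul h2).sub h1).sub (hs.const_mul lam)
  refine h3.congr_deriv ?_
  have : Real.sqrt (1 + (h r) ^ 2) ≠ 0 := by positivity
  field_simp
  ring

lemma PData.start {m lam : ℝ} {f h : ℝ → ℝ} {R : EReal} (H : PData m lam f h R)
    (hR : 0 < R) (hm : 0 < m) {f0 : ℝ} (hf0 : Tendsto f (nhdsWithin 0 (Ioi 0)) (nhds f0))
    (hh0 : Tendsto h (nhdsWithin 0 (Ioi 0)) (nhds 0)) (hlam : -lam < f0) (δ : ℝ) (hδ : 0 < δ) :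
    ∃ a, 0 < a ∧ a < δ ∧ (a : EReal) < R ∧ h a < 0 ∧ PG m lam f h a < 0 := by
  by_contra hcon
  push Not at hcon
  have hid : Tendsto (fun r : ℝ => r) (nhdsWithin 0 (Ioi 0)) (nhds 0) :=
    tendsto_id.mono_left nhdsWithin_le_nhds
  have e1 : Tendsto (fun r => r * h r - f r - lam * Real.sqrt (1 + (h r) ^ 2))
      (nhdsWithin 0 (Ioi 0)) (nhds (0 * 0 - f0 - lam * Real.sqrt (1 + 0 ^ 2))) :=
    ((hid.mul hh0).sub hf0).sub (((hh0.pow 2).const_add 1).sqrt.const_mul lam)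
  have e2 : ∀ᶠ r in nhdsWithin (0:ℝ) (Ioi 0),
      r * h r - f r - lam * Real.sqrt (1 + (h r) ^ 2) < 0 := by
    apply e1.eventually_lt_const
    simp; linarith
  obtain ⟨R1, hR1, hR1R⟩ : ∃ R1 : ℝ, 0 < R1 ∧ (R1 : EReal) < R := by
    obtain ⟨q, hq0, hq⟩ := EReal.lt_iff_exists_real_btwn.1 hR
    exact ⟨q, by exact_mod_cast hq0, hq⟩
  obtain ⟨ε, hε, hε'⟩ := mem_nhdsGT_iff_exists_Ioo_subset.1 e2
  simp only [mem_Ioi] at hε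
  set b := min (min ε δ) R1 with hb
  have hb0 : 0 < b := lt_min (lt_min hε hδ) hR1
  have hbR : (b : EReal) < R := PData.mono_aux (min_le_right _ _) hR1R
  have hsgn : ∀ r, 0 < r → r < b → (0 ≤ h r → PG m lam f h r < 0) ∧
      (h r < 0 → 0 ≤ PG m lam f h r) := by
    intro r hr hrb
    have hrε : r < ε := hrb.trans_le ((min_le_left _ _).trans (min_le_left _ _))
    have hrδ : r < δ := hrb.trans_le ((min_le_left _ _).trans (min_le_right _ _))
    refine ⟨fun h0 => ?_, fun h0 => hcon r hr hrδ (PData.mono_aux hrb.le hbR) h0⟩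
    have : r * h r - f r - lam * Real.sqrt (1 + (h r) ^ 2) < 0 := hε' ⟨hr, hrε⟩
    have h3 : 0 ≤ m / r * h r := by positivity
    unfold PG
    nlinarith
  have hanti : AntitoneOn (fun r => h r ^ 2) (Ioo 0 b) := by
    have hd : ∀ r ∈ Ioo 0 b, HasDerivAt (fun r => h r ^ 2)
        (2 * h r * ((1 + (h r) ^ 2) * PG m lam f h r)) r := by
      intro r hr
      have := (H.hh r hr.1 (PData.mono_aux hr.2.le hbR)).pow 2
      refine this.congr_deriv ?_
      norm_num
    apply antitoneOn_of_deriv_nonpos (convex_Ioo _ _)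
    · exact fun r hr => (hd r hr).continuousAt.continuousWithinAt
    · rw [interior_Ioo]
      exact fun r hr => (hd r hr).differentiableAt.differentiableWithinAt
    · rw [interior_Ioo]
      intro r hr
      rw [(hd r hr).deriv]
      obtain ⟨s1, s2⟩ := hsgn r hr.1 hr.2
      have hpos : (0:ℝ) < 1 + (h r) ^ 2 := by positivity
      have : h r * PG m lam f h r ≤ 0 := by
        rcases le_or_gt 0 (h r) with h0 | h0
        · exact mul_nonpos_of_nonneg_of_nonpos h0 (s1 h0).le
        · exact mul_nonpos_of_nonpos_of_nonneg h0.le (s2 h0)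
      nlinarith
  have hzero : ∀ r ∈ Ioo 0 b, h r = 0 := by
    intro r hr
    have hle : h r ^ 2 ≤ 0 ^ 2 := by
      apply ge_of_tendsto (hh0.pow 2)
      filter_upwards [Ioo_mem_nhdsGT hr.1] with x hx
      exact hanti ⟨hx.1, hx.2.trans hr.2⟩ hr hx.2.le
    have : h r ^ 2 = 0 := le_antisymm (by simpa using hle) (sq_nonneg _)
    exact pow_eq_zero_iff (two_ne_zero) |>.1 this
  have hmid : b / 2 ∈ Ioo 0 b := ⟨by linarith, by linarith⟩
  have d1 := H.hh (b/2) hmid.1 (PData.mono_aux hmid.2.le hbR)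
  have d2 : HasDerivAt h 0 (b/2) := by
    apply (hasDerivAt_const (b/2) (0:ℝ)).congr_of_eventuallyEq
    filter_upwards [Ioo_mem_nhds hmid.1 hmid.2] with x hx using hzero x hx
  have d3 := d1.unique d2
  have := (hsgn _ hmid.1 hmid.2).1 (hzero _ hmid).ge
  rw [hzero _ hmid] at d3
  simp at d3
  linarith

lemma PData.anti {m lam : ℝ} {f h : ℝ → ℝ} {R : EReal} (H : PData m lam f h R)
    {a b : ℝ} (ha : 0 < a) (hab : a ≤ b) (hbR : (b : EReal) < R)
    (hG : ∀ x ∈ Ioo a b, PG m lam f h x < 0) : h b ≤ h a := by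
  have hd : ∀ r ∈ Icc a b, HasDerivAt h ((1 + (h r) ^ 2) * PG m lam f h r) r :=
    fun r hr => H.hh r (ha.trans_le hr.1) (PData.mono_aux hr.2 hbR)
  have : AntitoneOn h (Icc a b) := by
    apply antitoneOn_of_deriv_nonpos (convex_Icc _ _)
    · exact fun r hr => (hd r hr).continuousAt.continuousWithinAt
    · rw [interior_Icc]
      exact fun r hr => (hd r (Ioo_subset_Icc_self hr)).differentiableAt.differentiableWithinAt
    · rw [interior_Icc]
      intro r hr
      rw [(hd r (Ioo_subset_Icc_self hr)).deriv]
      exact mul_nonpos_of_nonneg_of_nonpos (by positivity) (hG r hr).le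
  exact this ⟨le_rfl, hab⟩ ⟨hab, le_rfl⟩ hab

lemma PData.neg {m lam : ℝ} {f h : ℝ → ℝ} {R : EReal} (H : PData m lam f h R)
    (hR : 0 < R) (hm : 0 < m) {f0 : ℝ} (hf0 : Tendsto f (nhdsWithin 0 (Ioi 0)) (nhds f0))
    (hh0 : Tendsto h (nhdsWithin 0 (Ioi 0)) (nhds 0)) (hlam : -lam < f0) :
    ∀ r : ℝ, 0 < r → (r : EReal) < R → PG m lam f h r < 0 ∧ h r < 0 := by
  have key : ∀ r : ℝ, 0 < r → (r : EReal) < R → PG m lam f h r < 0 := by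
    intro b hb hbR
    obtain ⟨a, ha, hab, haR, hha, hGa⟩ := H.start hR hm hf0 hh0 hlam b hb
    by_contra hGb
    push Not at hGb
    have hcont : ContinuousOn (PG m lam f h) (Icc a b) := fun r hr =>
      (H.dG (ha.trans_le hr.1) (PData.mono_aux hr.2 hbR)).continuousAt.continuousWithinAt
    have hS : IsCompact (Icc a b ∩ PG m lam f h ⁻¹' (Ici 0)) :=
      isCompact_Icc.of_isClosed_subset
          (hcont.preimage_isClosed_of_isClosed isClosed_Icc isClosed_Ici) inter_subset_left
    obtain ⟨c, hc⟩ := hS.exists_isLeast ⟨b, ⟨hab.le, le_rfl⟩, hGb⟩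
    have hca : a < c := lt_of_le_of_ne hc.1.1.1 (by rintro rfl; exact absurd hc.1.2 (not_le.2 hGa))
    have hlt : ∀ x ∈ Ico a c, PG m lam f h x < 0 := by
      intro x hx
      by_contra hx'
      push Not at hx'
      exact absurd (hc.2 ⟨⟨hx.1, hx.2.le.trans hc.1.1.2⟩, hx'⟩) (not_le.2 hx.2)
    have hcR := PData.mono_aux hc.1.1.2 hbR
    have hc0 := ha.trans hca
    have hd := H.dG hc0 hcR
    have hGc0 : 0 ≤ PG m lam f h c := hc.1.2
    have hGc : PG m lam f h c = 0 := by
      apply le_antisymm _ hGc0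
      have : Tendsto (PG m lam f h) (nhdsWithin c (Iio c)) (nhds (PG m lam f h c)) :=
        hd.continuousAt.mono_left nhdsWithin_le_nhds
      apply le_of_tendsto this
      filter_upwards [Ioo_mem_nhdsLT hca] with x hx using (hlt x ⟨hx.1.le, hx.2⟩).le
    have hhc : h c < 0 :=
      (H.anti ha hca.le hcR (fun x hx => hlt x ⟨hx.1.le, hx.2⟩)).trans_lt hha
    rw [hGc] at hd
    simp only [mul_zero, add_zero] at hd
    have hneg : m / c ^ 2 * h c < 0 := mul_neg_of_pos_of_neg (by positivity) hhc
    have hsl := (hasDerivAt_iff_tendsto_slope_left_right.1 hd).1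
    have : 0 ≤ m / c ^ 2 * h c := by
      apply ge_of_tendsto hsl
      filter_upwards [Ioo_mem_nhdsLT hca] with x hx
      rw [slope_def_field, hGc]
      apply div_nonneg_of_nonpos
      · have := hlt x ⟨hx.1.le, hx.2⟩
        linarith
      · linarith [hx.2]
    linarith
  intro r hr hrR
  refine ⟨key r hr hrR, ?_⟩
  obtain ⟨a, ha, hab, haR, hha, hGa⟩ := H.start hR hm hf0 hh0 hlam r hr
  exact (H.anti ha hab.le hrR
    (fun x hx => key x (ha.trans hx.1) (PData.mono_aux hx.2.le hrR))).trans_lt hha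

/-- The solution cannot exist for all radii. -/
lemma PData.finite {m lam : ℝ} {f h : ℝ → ℝ} (hm : 0 < m)
    (H : PData m lam f h ⊤)
    (hneg : ∀ r : ℝ, 0 < r → PG m lam f h r < 0 ∧ h r < 0) : False := by
  set r0 : ℝ := m + |lam| + 2 with hr0
  have hl0 := abs_nonneg lam
  have hr0pos : 0 < r0 := by linarith
  have hd : ∀ r, 0 < r → HasDerivAt (PG m lam f h) _ r := fun r hr =>
    H.dG hr (EReal.coe_lt_top r)
  have hGanti : AntitoneOn (PG m lam f h) (Ici r0) := by
    apply antitoneOn_of_deriv_nonpos (convex_Ici _)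
    · exact fun r hr => (hd r (hr0pos.trans_le hr)).continuousAt.continuousWithinAt
    · exact fun r hr => (hd r (hr0pos.trans_le (interior_subset hr))).differentiableAt.differentiableWithinAt
    · intro r hr
      have hr' : r0 ≤ r := interior_subset hr
      have hrpos : 0 < r := hr0pos.trans_le hr'
      rw [(hd r hrpos).deriv]
      obtain ⟨hG, hh⟩ := hneg r hrpos
      have h1 : m / r ^ 2 * h r ≤ 0 := mul_nonpos_of_nonneg_of_nonpos (by positivity) hh.le
      have h2 : (1 + h r ^ 2) * PG m lam f h r ≤ 0 :=
        mul_nonpos_of_nonneg_of_nonpos (by positivity) hG.le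
      have h3 : m / r ≤ 1 := by rw [div_le_one hrpos]; linarith
      have h4 : |h r / Real.sqrt (1 + h r ^ 2)| ≤ 1 := by
        rw [abs_div, abs_of_pos (show 0 < Real.sqrt (1 + h r ^ 2) by positivity),
          div_le_one (by positivity)]
        apply Real.abs_le_sqrt; linarith
      have h5 : |lam * (h r / Real.sqrt (1 + h r ^ 2))| ≤ |lam| := by
        rw [abs_mul]; nlinarith
      have h6 := (abs_le.1 h5).2
      have h7 : 0 ≤ r - m / r + -lam * (h r / Real.sqrt (1 + h r ^ 2)) := by linarith
      have h8 := mul_nonpos_of_nonneg_of_nonpos h7 h2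
      linarith
  set k := -PG m lam f h r0 with hk
  have hkpos : 0 < k := by have := (hneg r0 hr0pos).1; linarith
  have hd2 : ∀ r, 0 < r → HasDerivAt (fun x => Real.arctan (h x) + k * x)
      (PG m lam f h r + k) r := by
    intro r hr
    have := ((H.hh r hr (EReal.coe_lt_top r)).arctan).add ((hasDerivAt_id r).const_mul k)
    refine this.congr_deriv ?_
    field_simp
  have hA : AntitoneOn (fun x => Real.arctan (h x) + k * x) (Ici r0) := by
    apply antitoneOn_of_deriv_nonpos (convex_Ici _)
    · exact fun r hr => (hd2 r (hr0pos.trans_le hr)).continuousAt.continuousWithinAt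
    · exact fun r hr => (hd2 r (hr0pos.trans_le (interior_subset hr))).differentiableAt.differentiableWithinAt
    · intro r hr
      have hr' : r0 ≤ r := interior_subset hr
      rw [(hd2 r (hr0pos.trans_le hr')).deriv]
      have := hGanti (mem_Ici.2 le_rfl) (mem_Ici.2 hr') hr'
      linarith
  have hpi : (0:ℝ) < π / k := by positivity
  have h1 := hA (mem_Ici.2 le_rfl) (mem_Ici.2 (show r0 ≤ r0 + π / k by linarith)) (by linarith)
  simp only [mul_add] at h1
  have h2 := Real.arctan_lt_pi_div_two (h r0)
  have h3 := Real.neg_pi_div_two_lt_arctan (h (r0 + π / k))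
  have h4 : k * (π / k) = π := by field_simp
  linarith

/-- `f` stays bounded below when `h` blows up. -/
lemma PData.bddBelow {m lam s : ℝ} {f h : ℝ → ℝ} (hm : 0 < m) (hs : 0 < s)
    (H : PData m lam f h s)
    (hneg : ∀ r : ℝ, 0 < r → r < s → PG m lam f h r < 0 ∧ h r < 0)
    (hlim : Tendsto h (nhdsWithin s (Iio s)) atBot) :
    ∃ b < s, 0 < b ∧ ∃ M : ℝ, ∀ r ∈ Ioo b s, M ≤ f r := by
  have hsq : ∀ u : ℝ, |u| ≤ Real.sqrt (1 + u ^ 2) ∧ Real.sqrt (1 + u ^ 2) ≤ 1 + |u| := by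
    intro u
    constructor
    · apply Real.abs_le_sqrt; linarith
    · apply Real.sqrt_le_iff.2 ⟨by positivity, ?_⟩
      nlinarith [abs_nonneg u, sq_abs u]
  rcases le_or_gt (s - m / s + lam) 0 with hc | hc
  · refine ⟨s / 2, by linarith, by linarith, -|lam|, ?_⟩
    intro r hr
    have hr0 : 0 < r := by linarith [hr.1]
    obtain ⟨hG, hh⟩ := hneg r hr0 hr.2
    obtain ⟨q1, q2⟩ := hsq (h r)
    rw [abs_of_neg hh] at q1 q2
    unfold PG at hG
    have h1 : m / s ≤ m / r := by
      apply div_le_div_of_nonneg_left hm.le hr0 hr.2.le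
    have h2 : 0 ≤ (r - m / r + lam) * h r :=
      mul_nonneg_of_nonpos_of_nonpos (by linarith [hr.2]) hh.le
    have h3 : lam * (Real.sqrt (1 + h r ^ 2) + h r) ≤ |lam| := by
      have : lam ≤ |lam| := le_abs_self lam
      have := abs_nonneg lam
      nlinarith
    nlinarith
  · set δ := (s - m / s + lam) / 2 with hδ
    have hδ0 : 0 < δ := by linarith
    -- the coefficient tends to `2 δ`
    have hid : Tendsto (fun r : ℝ => r) (nhdsWithin s (Iio s)) (nhds s) :=
      tendsto_id.mono_left nhdsWithin_le_nhds
    have hw : Tendsto (fun r => h r / Real.sqrt (1 + h r ^ 2)) (nhdsWithin s (Iio s))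
        (nhds (-1)) := by
      have hi : Tendsto (fun r => (h r)⁻¹) (nhdsWithin s (Iio s)) (nhds 0) :=
        tendsto_inv_atBot_zero.comp hlim
      have h1 : Tendsto (fun r => -(Real.sqrt (1 + (h r)⁻¹ ^ 2))⁻¹) (nhdsWithin s (Iio s))
          (nhds (-(Real.sqrt (1 + 0 ^ 2))⁻¹)) := by
        refine (((hi.pow 2).const_add 1).sqrt.inv₀ ?_).neg
        simp
      simp only [ne_eq, OfNat.ofNat_ne_zero, not_false_eq_true, zero_pow, add_zero,
        Real.sqrt_one, inv_one] at h1
      refine h1.congr' ?_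
      filter_upwards [hlim.eventually_lt_atBot 0] with r hr
      have hr_ne : h r ≠ 0 := hr.ne
      have e : 1 + h r ^ 2 = (-h r) ^ 2 * (1 + (h r)⁻¹ ^ 2) := by
        field_simp
        ring
      rw [e, Real.sqrt_mul (by positivity), Real.sqrt_sq (by linarith)]
      have : Real.sqrt (1 + (h r)⁻¹ ^ 2) ≠ 0 := by positivity
      field_simp
    have hcoef : Tendsto (fun r => r - m / r + -lam * (h r / Real.sqrt (1 + h r ^ 2)))
        (nhdsWithin s (Iio s)) (nhds (s - m / s + -lam * (-1))) :=
      (hid.sub (tendsto_const_nhds.div hid hs.ne')).add (hw.const_mul _)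
    have ev1 : ∀ᶠ r in nhdsWithin s (Iio s),
        δ < r - m / r + -lam * (h r / Real.sqrt (1 + h r ^ 2)) := by
      apply hcoef.eventually_const_lt
      linarith
    obtain ⟨b, hb, hb'⟩ := mem_nhdsLT_iff_exists_Ioo_subset.1 ev1
    simp only [mem_Iio] at hb
    set a := (max b 0 + s) / 2 with ha
    have hmax : max b 0 < s := max_lt hb hs
    have hab : b < a := by have := le_max_left b 0; linarith
    have ha0 : 0 < a := by have := le_max_right b 0; linarith
    have has : a < s := by linarith
    -- `PG - δ h` is nonincreasing
    have hd1 : ∀ r, 0 < r → r < s → HasDerivAt (fun x => PG m lam f h x - δ * h x) _ r :=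
      fun r hr hrs => (H.dG hr (EReal.coe_lt_coe_iff.2 hrs)).sub
        ((H.hh r hr (EReal.coe_lt_coe_iff.2 hrs)).const_mul δ)
    have hA : AntitoneOn (fun x => PG m lam f h x - δ * h x) (Ico a s) := by
      apply antitoneOn_of_deriv_nonpos (convex_Ico _ _)
      · exact fun r hr => (hd1 r (ha0.trans_le hr.1) hr.2).continuousAt.continuousWithinAt
      · exact fun r hr => (hd1 r (ha0.trans_le (interior_subset hr).1)
          (interior_subset hr).2).differentiableAt.differentiableWithinAt
      · intro r hr
        have hr' := interior_subset hr
        have hr0 := ha0.trans_le hr'.1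
        rw [(hd1 r hr0 hr'.2).deriv]
        obtain ⟨hG, hh⟩ := hneg r hr0 hr'.2
        have h1 : m / r ^ 2 * h r ≤ 0 := mul_nonpos_of_nonneg_of_nonpos (by positivity) hh.le
        have h2 : (1 + h r ^ 2) * PG m lam f h r ≤ 0 :=
          mul_nonpos_of_nonneg_of_nonpos (by positivity) hG.le
        have h3 : δ < r - m / r + -lam * (h r / Real.sqrt (1 + h r ^ 2)) :=
          hb' ⟨hab.trans_le hr'.1, hr'.2⟩
        have h4 := mul_nonpos_of_nonneg_of_nonpos (sub_nonneg.2 h3.le) h2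
        nlinarith
    set C := PG m lam f h a - δ * h a with hC
    have hle : ∀ r ∈ Ico a s, PG m lam f h r - δ * h r ≤ C := fun r hr =>
      hA ⟨le_rfl, has⟩ hr hr.1
    -- eventually `PG ≤ (δ/2) h`
    have ev2 : ∀ᶠ r in nhdsWithin s (Iio s), h r ≤ -(2 * C / δ) :=
      hlim.eventually_le_atBot _
    obtain ⟨b2, hb2, hb2'⟩ := mem_nhdsLT_iff_exists_Ioo_subset.1 ev2
    simp only [mem_Iio] at hb2
    set a2 := (max b2 a + s) / 2 with ha2
    have hmax2 : max b2 a < s := max_lt hb2 has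
    have hab2 : b2 < a2 := by have := le_max_left b2 a; linarith
    have haa2 : a < a2 := by have := le_max_right b2 a; linarith
    have ha2s : a2 < s := by linarith
    have hPG : ∀ r ∈ Ico a2 s, PG m lam f h r ≤ δ / 2 * h r := by
      intro r hr
      have h1 := hle r ⟨haa2.le.trans hr.1, hr.2⟩
      have h2 : h r ≤ -(2 * C / δ) := hb2' ⟨hab2.trans_le hr.1, hr.2⟩
      have h3 : δ * h r ≤ -(2 * C) := by
        calc δ * h r ≤ δ * -(2 * C / δ) := mul_le_mul_of_nonneg_left h2 hδ0.le
          _ = -(2 * C) := by field_simp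
      linarith
    have hd2 : ∀ r ∈ Ico a2 s, HasDerivAt (fun x => f x + 2 / δ * (h x)⁻¹)
        (h r + 2 / δ * (-((1 + h r ^ 2) * PG m lam f h r) / h r ^ 2)) r := by
      intro r hr
      have hr0 := ha0.trans (haa2.trans_le hr.1)
      exact (H.hf r hr0 (EReal.coe_lt_coe_iff.2 hr.2)).add
        (((H.hh r hr0 (EReal.coe_lt_coe_iff.2 hr.2)).inv (hneg r hr0 hr.2).2.ne).const_mul (2 / δ))
    have hM : MonotoneOn (fun x => f x + 2 / δ * (h x)⁻¹) (Ico a2 s) := by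
      apply monotoneOn_of_deriv_nonneg (convex_Ico _ _)
      · exact fun r hr => (hd2 r hr).continuousAt.continuousWithinAt
      · exact fun r hr => (hd2 r (interior_subset hr)).differentiableAt.differentiableWithinAt
      · intro r hr
        have hr' := interior_subset hr
        rw [(hd2 r hr').deriv]
        obtain ⟨hG, hh⟩ := hneg r (ha0.trans (haa2.trans_le hr'.1)) hr'.2
        have h1 := hPG r hr'
        have h2 : 0 < h r ^ 2 := by nlinarith
        have h3 : -(δ / 2 * h r) * h r ^ 2 ≤ -((1 + h r ^ 2) * PG m lam f h r) := by
          nlinarith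
        have h4 : -(δ / 2 * h r) ≤ -((1 + h r ^ 2) * PG m lam f h r) / h r ^ 2 := by
          rw [le_div_iff₀ h2]; exact h3
        have h5 : 2 / δ * -(δ / 2 * h r) ≤
            2 / δ * (-((1 + h r ^ 2) * PG m lam f h r) / h r ^ 2) :=
          mul_le_mul_of_nonneg_left h4 (by positivity)
        have h6 : 2 / δ * -(δ / 2 * h r) = -h r := by field_simp
        linarith
    refine ⟨a2, ha2s, ha0.trans haa2, f a2 + 2 / δ * (h a2)⁻¹, ?_⟩
    intro r hr
    have h1 := hM ⟨le_rfl, ha2s⟩ ⟨hr.1.le, hr.2⟩ hr.1.le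
    simp only at h1
    have h2 : (h r)⁻¹ < 0 := inv_lt_zero.2 (hneg r (ha0.trans (haa2.trans hr.1)) hr.2).2
    have h3 : 2 / δ * (h r)⁻¹ < 0 := mul_neg_of_pos_of_neg (by positivity) h2
    linarith

lemma glue_hasDerivAt {φ ψ φ' : ℝ → ℝ} {s d : ℝ} (hs : 0 < s)
    (h1 : ∀ r, 0 < r → r < s → HasDerivAt φ (φ' r) r)
    (h2 : Tendsto φ (nhdsWithin s (Iio s)) (nhds (ψ s)))
    (h3 : Tendsto φ' (nhdsWithin s (Iio s)) (nhds d)) (h4 : HasDerivAt ψ d s) :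
    HasDerivAt (fun r => if r < s then φ r else ψ r) d s := by
  set g : ℝ → ℝ := fun r => if r < s then φ r else ψ r with hg
  have hgs : g s = ψ s := by simp [hg]
  have hlt : ∀ r, r < s → g r = φ r := fun r hr => by simp [hg, hr]
  have hge : ∀ r, s ≤ r → g r = ψ r := fun r hr => by simp [hg, not_lt.2 hr]
  have hd : ∀ r ∈ Ioo 0 s, HasDerivAt g (φ' r) r := by
    intro r hr
    apply (h1 r hr.1 hr.2).congr_of_eventuallyEq
    filter_upwards [Iio_mem_nhds hr.2] with x hx using hlt x hx
  have hmem : Ioo 0 s ∈ nhdsWithin s (Iio s) := Ioo_mem_nhdsLT hs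
  have hL : HasDerivWithinAt g d (Iic s) s := by
    apply hasDerivWithinAt_Iic_of_tendsto_deriv (s := Ioo 0 s)
    · exact fun r hr => (hd r hr).differentiableAt.differentiableWithinAt
    · unfold ContinuousWithinAt
      rw [hgs]
      have : Tendsto g (nhdsWithin s (Iio s)) (nhds (ψ s)) := by
        apply h2.congr'
        filter_upwards [self_mem_nhdsWithin] with x hx using (hlt x hx).symm
      exact this.mono_left (nhdsWithin_mono _ (fun x hx => hx.2))
    · exact hmem
    · apply h3.congr'
      filter_upwards [hmem] with x hx using (hd x hx).deriv.symm
  have hRt : HasDerivWithinAt g d (Ici s) s :=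
    h4.hasDerivWithinAt.congr (fun x hx => hge x hx) hgs
  have := hL.union hRt
  rwa [Iic_union_Ici, hasDerivWithinAt_univ] at this

lemma PData.extend {m lam s L c : ℝ} {f h : ℝ → ℝ} (hs : 0 < s) (H : PData m lam f h s)
    (hf : Tendsto f (nhdsWithin s (Iio s)) (nhds L))
    (hh : Tendsto h (nhdsWithin s (Iio s)) (nhds c)) :
    ∃ ε > 0, ∃ g k : ℝ → ℝ, PData m lam g k ((s + ε : ℝ) : EReal) ∧ ∀ r < s, g r = f r := by
  set v : ℝ × ℝ × ℝ → ℝ × ℝ × ℝ := fun x =>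
    (1, x.2.2, (1 + x.2.2 ^ 2) * ((x.1 - m / x.1) * x.2.2 - x.2.1 -
      lam * Real.sqrt (1 + x.2.2 ^ 2))) with hv
  have hvC : ContDiffAt ℝ 1 v (s, L, c) := by
    have q1 : ContDiffAt ℝ 1 (fun x : ℝ × ℝ × ℝ => x.1) (s, L, c) := contDiffAt_fst
    have q2 : ContDiffAt ℝ 1 (fun x : ℝ × ℝ × ℝ => x.2.1) (s, L, c) :=
      contDiffAt_fst.comp _ contDiffAt_snd
    have q3 : ContDiffAt ℝ 1 (fun x : ℝ × ℝ × ℝ => x.2.2) (s, L, c) :=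
      contDiffAt_snd.comp _ contDiffAt_snd
    have q4 : ContDiffAt ℝ 1 (fun x : ℝ × ℝ × ℝ => 1 + x.2.2 ^ 2) (s, L, c) :=
      contDiffAt_const.add (q3.pow 2)
    have q5 := q4.sqrt (by simp only; positivity)
    have q6 : ContDiffAt ℝ 1 (fun x : ℝ × ℝ × ℝ => m / x.1) (s, L, c) :=
      contDiffAt_const.div q1 hs.ne'
    exact contDiffAt_const.prodMk (q3.prodMk
      (q4.mul ((((q1.sub q6).mul q3).sub q2).sub (contDiffAt_const.mul q5))))
  obtain ⟨α, hα0, ε, hε, hα⟩ :=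
    hvC.exists_forall_mem_closedBall_exists_eq_forall_mem_Ioo_hasDerivAt₀ s
  have hsI : s ∈ Ioo (s - ε) (s + ε) := ⟨by linarith, by linarith⟩
  have d1 : ∀ t ∈ Ioo (s - ε) (s + ε), HasDerivAt (fun t => (α t).1) 1 t := fun t ht =>
    (ContinuousLinearMap.fst ℝ ℝ (ℝ × ℝ)).hasFDerivAt.comp_hasDerivAt t (hα t ht)
  have ds : ∀ t ∈ Ioo (s - ε) (s + ε), HasDerivAt (fun t => (α t).2) (v (α t)).2 t := fun t ht =>
    (ContinuousLinearMap.snd ℝ ℝ (ℝ × ℝ)).hasFDerivAt.comp_hasDerivAt t (hα t ht)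
  have d2 : ∀ t ∈ Ioo (s - ε) (s + ε), HasDerivAt (fun t => (α t).2.1) (α t).2.2 t := fun t ht =>
    (ContinuousLinearMap.fst ℝ ℝ ℝ).hasFDerivAt.comp_hasDerivAt t (ds t ht)
  have d3 : ∀ t ∈ Ioo (s - ε) (s + ε), HasDerivAt (fun t => (α t).2.2) (v (α t)).2.2 t :=
    fun t ht => (ContinuousLinearMap.snd ℝ ℝ ℝ).hasFDerivAt.comp_hasDerivAt t (ds t ht)
  have htime : ∀ t ∈ Ioo (s - ε) (s + ε), (α t).1 = t := by
    intro t ht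
    have hd : ∀ t ∈ Ioo (s - ε) (s + ε), HasDerivAt (fun t => (α t).1 - t) 0 t := fun t ht =>
      ((d1 t ht).sub (hasDerivAt_id t)).congr_deriv (by simp)
    have := isOpen_Ioo.is_const_of_deriv_eq_zero isPreconnected_Ioo
      (fun t ht => (hd t ht).differentiableAt.differentiableWithinAt)
      (fun t ht => (hd t ht).deriv) ht hsI
    simp only [hα0] at this
    linarith
  set ψ : ℝ → ℝ := fun t => (α t).2.1 with hψ
  set χ : ℝ → ℝ := fun t => (α t).2.2 with hχ
  have hψs : ψ s = L := by simp [hψ, hα0]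
  have hχs : χ s = c := by simp [hχ, hα0]
  have d3' : ∀ t ∈ Ioo (s - ε) (s + ε),
      HasDerivAt χ ((1 + (χ t) ^ 2) * PG m lam ψ χ t) t := by
    intro t ht
    refine (d3 t ht).congr_deriv ?_
    simp only [hv, PG, htime t ht, hψ, hχ]
  refine ⟨ε, hε, fun r => if r < s then f r else ψ r, fun r => if r < s then h r else χ r, ?_,
    fun r hr => by simp [hr]⟩
  have hPGlim : Tendsto (fun r => (1 + (h r) ^ 2) * PG m lam f h r) (nhdsWithin s (Iio s))
      (nhds ((1 + c ^ 2) * ((s - m / s) * c - L - lam * Real.sqrt (1 + c ^ 2)))) := by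
    have hid : Tendsto (fun r : ℝ => r) (nhdsWithin s (Iio s)) (nhds s) :=
      tendsto_id.mono_left nhdsWithin_le_nhds
    exact ((hh.pow 2).const_add 1).mul
      ((((hid.sub (tendsto_const_nhds.div hid hs.ne')).mul hh).sub hf).sub
        (((hh.pow 2).const_add 1).sqrt.const_mul lam))
  constructor
  · intro r hr hrR
    have hrR' : r < s + ε := EReal.coe_lt_coe_iff.1 hrR
    rcases lt_trichotomy r s with hlt | heq | hgt
    · simp only [hlt, if_true]
      apply (H.hf r hr (EReal.coe_lt_coe_iff.2 hlt)).congr_of_eventuallyEq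
      filter_upwards [Iio_mem_nhds hlt] with x hx
      simp [mem_Iio.1 hx]
    · subst heq
      simp only [lt_irrefl, if_false]
      apply glue_hasDerivAt hs (φ' := h) (fun x hx hxs => H.hf x hx (EReal.coe_lt_coe_iff.2 hxs))
      · rw [hψs]; exact hf
      · rw [hχs]; exact hh
      · exact d2 r hsI
    · simp only [not_lt.2 hgt.le, if_false]
      apply (d2 r ⟨by linarith, hrR'⟩).congr_of_eventuallyEq
      filter_upwards [Ioi_mem_nhds hgt] with x hx
      simp [not_lt.2 (le_of_lt (mem_Ioi.1 hx)), hψ]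
  · intro r hr hrR
    have hrR' : r < s + ε := EReal.coe_lt_coe_iff.1 hrR
    rcases lt_trichotomy r s with hlt | heq | hgt
    · simp only [hlt, if_true, PG]
      apply (H.hh r hr (EReal.coe_lt_coe_iff.2 hlt)).congr_of_eventuallyEq
      filter_upwards [Iio_mem_nhds hlt] with x hx
      simp [mem_Iio.1 hx]
    · subst heq
      simp only [lt_irrefl, if_false, PG]
      apply glue_hasDerivAt hs (φ' := fun x => (1 + (h x) ^ 2) * PG m lam f h x)
        (fun x hx hxs => H.hh x hx (EReal.coe_lt_coe_iff.2 hxs))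
      · rw [hχs]; exact hh
      · rw [hχs, hψs]; exact hPGlim
      · exact d3' r hsI
    · simp only [not_lt.2 hgt.le, if_false, PG]
      apply (d3' r ⟨by linarith, hrR'⟩).congr_of_eventuallyEq
      filter_upwards [Ioi_mem_nhds hgt] with x hx
      simp [not_lt.2 (le_of_lt (mem_Ioi.1 hx)), hχ]

lemma isOpen_domain (R : EReal) : IsOpen {r : ℝ | 0 < r ∧ (r : EReal) < R} :=
  (isOpen_lt continuous_const continuous_id).inter
    (isOpen_lt continuous_coe_real_ereal continuous_const)

lemma PData.sol {n : ℕ} {lam : ℝ} {f h : ℝ → ℝ} {R : EReal}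
    (H : PData ((n : ℝ) - 1) lam f h R) :
    ContDiffOn ℝ 2 f {r : ℝ | 0 < r ∧ (r : EReal) < R} ∧
    ∀ r : ℝ, 0 < r → (r : EReal) < R → ProfileEq n lam f r := by
  have ho := isOpen_domain R
  have e1 : EqOn (deriv f) h {r : ℝ | 0 < r ∧ (r : EReal) < R} :=
    fun r hr => (H.hf r hr.1 hr.2).deriv
  constructor
  · rw [show (2 : WithTop ℕ∞) = 1 + 1 by norm_num, contDiffOn_succ_iff_deriv_of_isOpen ho]
    refine ⟨fun r hr => (H.hf r hr.1 hr.2).differentiableAt.differentiableWithinAt, by simp, ?_⟩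
    refine ContDiffOn.congr ?_ e1
    rw [show (1 : WithTop ℕ∞) = 0 + 1 by norm_num, contDiffOn_succ_iff_deriv_of_isOpen ho]
    refine ⟨fun r hr => (H.hh r hr.1 hr.2).differentiableAt.differentiableWithinAt, by simp, ?_⟩
    rw [contDiffOn_zero]
    refine ContinuousOn.congr (f := fun r => (1 + (h r) ^ 2) * PG ((n : ℝ) - 1) lam f h r) ?_
      (fun r hr => (H.hh r hr.1 hr.2).deriv)
    intro r hr
    have c1 := (H.hh r hr.1 hr.2).continuousAt
    have c2 := (H.dG hr.1 hr.2).continuousAt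
    exact (((c1.pow 2).const_add 1).mul c2).continuousWithinAt
  · intro r hr hrR
    have e2 : deriv (deriv f) r = (1 + (h r) ^ 2) * PG ((n : ℝ) - 1) lam f h r := by
      rw [Filter.EventuallyEq.deriv_eq (e1.eventuallyEq_of_mem (ho.mem_nhds ⟨hr, hrR⟩))]
      exact (H.hh r hr hrR).deriv
    unfold ProfileEq
    rw [e2, (H.hf r hr hrR).deriv]
    have : (1 + (h r) ^ 2) ≠ 0 := by positivity
    rw [mul_div_cancel_left₀ _ this]
    rfl

lemma IsProfileSolOn.pdata {n : ℕ} {lam : ℝ} {f : ℝ → ℝ} {R : EReal}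
    (hsol : IsProfileSolOn n lam f R) : PData ((n : ℝ) - 1) lam f (deriv f) R := by
  obtain ⟨-, h2, h3⟩ := hsol
  have ho := isOpen_domain R
  constructor
  · intro r hr hrR
    exact ((h2.differentiableOn (by norm_num)).differentiableAt
      (ho.mem_nhds ⟨hr, hrR⟩)).hasDerivAt
  · intro r hr hrR
    have d := (((h2.deriv_of_isOpen (m := 1) ho (by norm_num)).differentiableOn
      (by norm_num)).differentiableAt (ho.mem_nhds ⟨hr, hrR⟩)).hasDerivAt
    refine d.congr_deriv ?_
    have h4 := h3 r hr hrR
    unfold ProfileEq at h4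
    rw [div_eq_iff (by positivity)] at h4
    rw [h4, mul_comm]
    rfl

lemma antitone_dichotomy {φ : ℝ → ℝ} {s : ℝ} (hs : 0 < s) (hφ : AntitoneOn φ (Ioo 0 s)) :
    Tendsto φ (nhdsWithin s (Iio s)) atBot ∨
      ∃ L, Tendsto φ (nhdsWithin s (Iio s)) (nhds L) := by
  by_cases hb : BddBelow (φ '' Ioo 0 s)
  · right
    refine ⟨sInf (φ '' Ioo 0 s), ?_⟩
    have hne : (φ '' Ioo 0 s).Nonempty := (nonempty_Ioo.2 hs).image _
    rw [tendsto_order]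
    constructor
    · intro a ha
      filter_upwards [Ioo_mem_nhdsLT hs] with x hx
      exact ha.trans_le (csInf_le hb ⟨x, hx, rfl⟩)
    · intro a ha
      obtain ⟨_, ⟨y, hy, rfl⟩, hya⟩ := exists_lt_of_csInf_lt hne ha
      filter_upwards [Ioo_mem_nhdsLT hy.2] with x hx
      exact (hφ hy ⟨hy.1.trans hx.1, hx.2⟩ hx.1.le).trans_lt hya
  · left
    rw [tendsto_atBot]
    intro M
    rw [not_bddBelow_iff] at hb
    obtain ⟨_, ⟨y, hy, rfl⟩, hya⟩ := hb M
    filter_upwards [Ioo_mem_nhdsLT hy.2] with x hx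
    exact (hφ hy ⟨hy.1.trans hx.1, hx.2⟩ hx.1.le).trans hya.le

/-- The `C¹` condition at the origin forces `f'(0⁺) = 0`. -/
lemma IsProfileSolOn.limits {n : ℕ} (hn : 2 ≤ n) {lam : ℝ} {f : ℝ → ℝ} {R : EReal} (hR : 0 < R)
    (hsol : IsProfileSolOn n lam f R) :
    Tendsto f (nhdsWithin 0 (Ioi 0)) (nhds (f 0)) ∧
    Tendsto (deriv f) (nhdsWithin 0 (Ioi 0)) (nhds 0) := by
  have H := hsol.pdata
  obtain ⟨R1, hR1, hR1R⟩ : ∃ R1 : ℝ, 0 < R1 ∧ (R1 : EReal) < R := by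
    obtain ⟨q, hq0, hq⟩ := EReal.lt_iff_exists_real_btwn.1 hR
    exact ⟨q, by exact_mod_cast hq0, hq⟩
  have hC : ContDiffOn ℝ 1 f (Icc 0 R1) :=
    hsol.1.mono (fun r hr => ⟨hr.1, PData.mono_aux hr.2 hR1R⟩)
  have hle : nhdsWithin (0:ℝ) (Ioi 0) ≤ nhdsWithin 0 (Icc 0 R1) := by
    rw [← nhdsWithin_Ioo_eq_nhdsGT hR1]
    exact nhdsWithin_mono _ Ioo_subset_Icc_self
  have h0 : (0:ℝ) ∈ Icc 0 R1 := ⟨le_rfl, hR1.le⟩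
  have t1 : Tendsto f (nhdsWithin 0 (Ioi 0)) (nhds (f 0)) :=
    (hC.continuousOn 0 h0).mono_left hle
  set c := derivWithin f (Icc 0 R1) 0 with hc
  have t2 : Tendsto (deriv f) (nhdsWithin 0 (Ioi 0)) (nhds c) := by
    have : Tendsto (derivWithin f (Icc 0 R1)) (nhdsWithin 0 (Ioi 0)) (nhds c) :=
      ((hC.continuousOn_derivWithin (uniqueDiffOn_Icc hR1) le_rfl) 0 h0).mono_left hle
    apply this.congr'
    filter_upwards [Ioo_mem_nhdsGT hR1] with x hx
    exact derivWithin_of_mem_nhds (Icc_mem_nhds hx.1 hx.2)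
  refine ⟨t1, ?_⟩
  suffices hc0 : c = 0 by rwa [hc0] at t2
  have hid : Tendsto (fun r : ℝ => r) (nhdsWithin 0 (Ioi 0)) (nhds 0) :=
    tendsto_id.mono_left nhdsWithin_le_nhds
  set m : ℝ := (n : ℝ) - 1 with hm
  have hmpos : 0 < m := by
    have : (2:ℝ) ≤ n := by exact_mod_cast hn
    linarith
  have lim : Tendsto (fun r => (deriv f r + (1 + deriv f r ^ 2) *
      (r * (r * deriv f r - f r - lam * Real.sqrt (1 + deriv f r ^ 2)) - m * deriv f r)) / 1)
      (nhdsWithin 0 (Ioi 0)) (nhds ((c + (1 + c ^ 2) *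
      (0 * (0 * c - f 0 - lam * Real.sqrt (1 + c ^ 2)) - m * c)) / 1)) := by
    have q := (t2.pow 2).const_add 1
    exact (t2.add (q.mul ((hid.mul (((hid.mul t2).sub t1).sub (q.sqrt.const_mul lam))).sub
      (t2.const_mul m)))).div_const 1
  have hop := HasDerivAt.lhopital_zero_nhdsGT (f := fun r => r * deriv f r) (g := fun r => r)
    (f' := fun r => deriv f r + (1 + deriv f r ^ 2) *
      (r * (r * deriv f r - f r - lam * Real.sqrt (1 + deriv f r ^ 2)) - m * deriv f r))
    (g' := fun _ => 1) (a := 0) ?_ (Eventually.of_forall fun x => hasDerivAt_id x) (by simp)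
    (by simpa using hid.mul t2) hid lim
  · have hop2 : Tendsto (deriv f) (nhdsWithin 0 (Ioi 0)) _ := hop.congr' (by
      filter_upwards [self_mem_nhdsWithin] with x hx
      have : x ≠ 0 := ne_of_gt hx
      field_simp)
    have := tendsto_nhds_unique t2 hop2
    have h5 : (1 + c ^ 2) * m * c = 0 := by linarith
    have h6 : (1 + c ^ 2) * m ≠ 0 := by positivity
    exact (mul_eq_zero.1 h5).resolve_left h6
  · filter_upwards [Ioo_mem_nhdsGT hR1] with x hx
    have d := (hasDerivAt_id x).mul (H.hh x hx.1 (PData.mono_aux hx.2.le hR1R))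
    refine d.congr_deriv ?_
    have : x ≠ 0 := hx.1.ne'
    simp only [PG, id]
    field_simp
    ring

/-- Lemma 2.1: a maximal solution of the profile ODE with `f(0) > -λ` and `f'(0) = 0`
is strictly concave, has finite maximal existence radius `r_*`, and blows up there:
`f'(r) → -∞` while `f(r)` stays bounded (converges to a finite limit) as `r → r_*⁻`. -/
theorem profile_solution_blow_up
    (n : ℕ) (hn : 2 ≤ n) (lam : ℝ) (f : ℝ → ℝ) (R : EReal) (hR : 0 < R)
    (hsol : IsProfileSolOn n lam f R)
    (hmax : ∀ (g : ℝ → ℝ) (R' : EReal), R < R' → IsProfileSolOn n lam g R' →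
      (∀ r : ℝ, 0 ≤ r → (r : EReal) < R → g r = f r) → False)
    (hf0 : f 0 > -lam) (hf0' : deriv f 0 = 0) :
    (∀ r : ℝ, 0 < r → (r : EReal) < R → deriv (deriv f) r < 0) ∧
    ∃ rstar : ℝ, R = (rstar : EReal) ∧
      Tendsto (deriv f) (nhdsWithin rstar (Iio rstar)) atBot ∧
      ∃ L : ℝ, Tendsto f (nhdsWithin rstar (Iio rstar)) (nhds L) := by
  have H := hsol.pdata
  obtain ⟨t1, t2⟩ := hsol.limits hn hR
  have hm : (0:ℝ) < (n : ℝ) - 1 := by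
    have : (2:ℝ) ≤ n := by exact_mod_cast hn
    linarith
  have hneg := H.neg hR hm t1 t2 hf0
  refine ⟨fun r hr hrR => ?_, ?_⟩
  · rw [(H.hh r hr hrR).deriv]
    exact mul_neg_of_pos_of_neg (by positivity) (hneg r hr hrR).1
  induction R with
  | bot => simp at hR
  | top => exact (H.finite hm (fun r hr => hneg r hr (EReal.coe_lt_top r))).elim
  | coe s =>
    have hs : 0 < s := by exact_mod_cast hR
    have hneg' : ∀ r : ℝ, 0 < r → r < s →
        PG ((n : ℝ) - 1) lam f (deriv f) r < 0 ∧ deriv f r < 0 :=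
      fun r hr hrs => hneg r hr (EReal.coe_lt_coe_iff.2 hrs)
    have hAh : AntitoneOn (deriv f) (Ioo 0 s) := fun a ha b hb hab =>
      H.anti ha.1 hab (EReal.coe_lt_coe_iff.2 hb.2)
        (fun x hx => (hneg' x (ha.1.trans hx.1) (hx.2.trans hb.2)).1)
    have hAf : AntitoneOn f (Ioo 0 s) := by
      have hd : ∀ r ∈ Ioo 0 s, HasDerivAt f (deriv f r) r :=
        fun r hr => H.hf r hr.1 (EReal.coe_lt_coe_iff.2 hr.2)
      apply antitoneOn_of_deriv_nonpos (convex_Ioo _ _)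
      · exact fun r hr => (hd r hr).continuousAt.continuousWithinAt
      · exact fun r hr => (hd r (interior_subset hr)).differentiableAt.differentiableWithinAt
      · intro r hr
        have hr' := interior_subset hr
        exact (hneg' r hr'.1 hr'.2).2.le
    refine ⟨s, rfl, ?_⟩
    -- a lower bound for `f` near `s` yields a limit
    have hflim : (∃ b < s, 0 < b ∧ ∃ M : ℝ, ∀ r ∈ Ioo b s, M ≤ f r) →
        ∃ L : ℝ, Tendsto f (nhdsWithin s (Iio s)) (nhds L) := by
      rintro ⟨b, hb, -, M, hM⟩
      refine (antitone_dichotomy hs hAf).resolve_left fun hbot => ?_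
      obtain ⟨x, hx1, hx2⟩ := ((hbot.eventually_lt_atBot M).and (Ioo_mem_nhdsLT hb)).exists
      exact absurd (hM x hx2) (not_le.2 hx1)
    have hblow : Tendsto (deriv f) (nhdsWithin s (Iio s)) atBot := by
      refine (antitone_dichotomy hs hAh).resolve_right ?_
      rintro ⟨c, hc⟩
      have hcle : ∀ r ∈ Ioo 0 s, c ≤ deriv f r := by
        intro r hr
        apply le_of_tendsto hc
        filter_upwards [Ioo_mem_nhdsLT hr.2] with x hx
        exact hAh hr ⟨hr.1.trans hx.1, hx.2⟩ hx.1.le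
      obtain ⟨L, hL⟩ : ∃ L : ℝ, Tendsto f (nhdsWithin s (Iio s)) (nhds L) := by
        apply hflim
        have hd : ∀ r ∈ Ioo 0 s, HasDerivAt (fun x => f x - c * x) (deriv f r - c) r := by
          intro r hr
          have := (H.hf r hr.1 (EReal.coe_lt_coe_iff.2 hr.2)).sub
            ((hasDerivAt_id r).const_mul c)
          exact this.congr_deriv (by simp)
        have hmono : MonotoneOn (fun x => f x - c * x) (Ioo 0 s) := by
          apply monotoneOn_of_deriv_nonneg (convex_Ioo _ _)
          · exact fun r hr => (hd r hr).continuousAt.continuousWithinAt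
          · exact fun r hr => (hd r (interior_subset hr)).differentiableAt.differentiableWithinAt
          · intro r hr
            have hr' := interior_subset hr
            rw [(hd r hr').deriv]
            linarith [hcle r hr']
        have hmid : s / 2 ∈ Ioo 0 s := ⟨by linarith, by linarith⟩
        have hc0 : c < 0 := (hcle _ hmid).trans_lt (hneg' _ hmid.1 hmid.2).2
        refine ⟨s / 2, by linarith, by linarith, f (s / 2) - c * (s / 2) + c * s, ?_⟩
        intro r hr
        have h1 := hmono hmid ⟨hmid.1.trans hr.1, hr.2⟩ hr.1.le
        simp only at h1
        nlinarith [hr.2]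
      obtain ⟨ε, hε, g, k, Hg, hgf⟩ := H.extend hs hL hc
      obtain ⟨g1, g2⟩ := Hg.sol
      refine hmax g ((s + ε : ℝ) : EReal) (EReal.coe_lt_coe_iff.2 (by linarith))
        ⟨?_, g1, g2⟩ (fun r _ hrs => hgf r (EReal.coe_lt_coe_iff.1 hrs))
      intro r hr
      rcases hr.1.eq_or_lt with h0 | h0
      · subst h0
        have c1 : ContDiffWithinAt ℝ 1 f {r : ℝ | 0 ≤ r ∧ (r : EReal) < s} 0 :=
          hsol.1 0 ⟨le_rfl, hR⟩
        have c2 : ContDiffWithinAt ℝ 1 g {r : ℝ | 0 ≤ r ∧ (r : EReal) < s} 0 :=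
          c1.congr (fun y hy => hgf y (EReal.coe_lt_coe_iff.1 hy.2)) (hgf 0 hs)
        apply c2.mono_of_mem_nhdsWithin
        filter_upwards [self_mem_nhdsWithin, mem_nhdsWithin_of_mem_nhds (Iio_mem_nhds hs)]
          with x hx hxs
        exact ⟨hx.1, EReal.coe_lt_coe_iff.2 hxs⟩
      · exact (((g1.of_le (by norm_num)).contDiffAt
          ((isOpen_domain _).mem_nhds ⟨h0, hr.2⟩))).contDiffWithinAt
    exact ⟨hblow, hflim (H.bddBelow hm hs hneg' hblow)⟩
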